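/- Let s ∈ {0,1}^{-ℕ} be an admissible left-infinite sequence with τ_L(s) < ∞ and τ_R(s) < ∞. Then the projection of the basic arc A(s) to the 0-th coordinate satisfies π_0(A(s)) = [T^{τ_L(s)}(c), T^{τ_R(s)}(c)]. -/

import Mathlib

/-- `T : ℝ → ℝ` is a unimodal map on `[0,1]` with critical point `c`. -/
def IsUnimodal (T : ℝ → ℝ) (c : ℝ) : Prop :=
  ContinuousOn T (Set.Icc 0 1) ∧ Set.MapsTo T (Set.Icc 0 1) (Set.Icc 0 1) ∧
    T 0 = 0 ∧ 0 < c ∧ c < 1 ∧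
    StrictMonoOn T (Set.Icc 0 c) ∧ StrictAntiOn T (Set.Icc c 1)

-- Symbols `0, *, 1` are encoded as `(0 : Fin 3), (1 : Fin 3), (2 : Fin 3)`
-- respectively; this realizes the order `0 < * < 1`.
open Classical in
/-- The raw (unmodified) itinerary of `x`: the `n`-th symbol is `0` if `Tⁿ(x) < c`,
`*` if `Tⁿ(x) = c` and `1` if `Tⁿ(x) > c`. -/
noncomputable def rawItin (T : ℝ → ℝ) (c : ℝ) (x : ℝ) : ℕ → Fin 3 := fun n =>
  if T^[n] x < c then 0 else if T^[n] x = c then 1 else 2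

/-- The number of `1`s among the first `k` symbols of `s`. -/
def onesCount (s : ℕ → Fin 3) (k : ℕ) : ℕ :=
  ((Finset.range k).filter fun i => s i = 2).card

/-- The (strict) parity-lexicographical ordering on `{0,*,1}^ℕ`. -/
def PlexLt (s t : ℕ → Fin 3) : Prop :=
  ∃ k : ℕ, (∀ i < k, s i = t i) ∧ s k ≠ t k ∧
    ((s k < t k ∧ Even (onesCount s k)) ∨ (t k < s k ∧ Odd (onesCount s k)))

/-- The parity-lexicographical ordering `⪯`. -/
def PlexLe (s t : ℕ → Fin 3) : Prop := PlexLt s t ∨ s = t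

open Classical in
/-- The (modified) kneading sequence `ν = c₁c₂… = I(T(c))`: if the critical point is
periodic, so that the raw itinerary of `T(c)` contains `*` (first at index `n-1`, whence it
is `(c₁…c_{n-1}*)^∞`), then `ν` is the parity-lexicographically smaller of
`(c₁…c_{n-1}0)^∞` and `(c₁…c_{n-1}1)^∞`. -/
noncomputable def kneading (T : ℝ → ℝ) (c : ℝ) : ℕ → Fin 3 :=
  if h : ∃ i, rawItin T c (T c) i = 1 then
    let n := Nat.find h + 1
    let w : Fin 3 → ℕ → Fin 3 := fun b j =>
      if j % n = n - 1 then b else rawItin T c (T c) (j % n)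
    if PlexLe (w 0) (w 2) then w 0 else w 2
  else rawItin T c (T c)

open Classical in
/-- The modified itinerary of `x`: it agrees with the raw itinerary up to the first
occurrence of `*` (if any), and after that first `*` it continues with the modified
kneading sequence `ν`. -/
noncomputable def itin (T : ℝ → ℝ) (c : ℝ) (x : ℝ) : ℕ → Fin 3 :=
  if h : ∃ i, T^[i] x = c then
    fun n =>
      if n < Nat.find h then rawItin T c x n
      else if n = Nat.find h then 1
      else kneading T c (n - Nat.find h - 1)
  else rawItin T c x


/-- The inverse limit `X = lim←([0,1], T)`, modelled as sequences
`x : ℕ → ℝ` where `x n` represents the coordinate `x_{-n}`. -/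
def invLimitSet (T : ℝ → ℝ) : Set (ℕ → ℝ) :=
  {x | (∀ n, x n ∈ Set.Icc (0 : ℝ) 1) ∧ ∀ n, T (x (n + 1)) = x n}

/-- Encoding of the two-element alphabet `{0,1}` into `{0,*,1}`:
`false ↦ 0` and `true ↦ 1` (i.e. `(2 : Fin 3)`). -/
def b2f (b : Bool) : Fin 3 := if b then 2 else 0

/-- A left-infinite sequence `s = …s_{-2}s_{-1} ∈ {0,1}^{-ℕ}` is modelled as
`s : ℕ → Bool` with `s i` representing `s_{-(i+1)}`. It is admissible if every finite
subword `s_{-(m+1)} … s_{-1}` of it occurs in the (modified) itinerary of some point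
of `[0,1]`. -/
def AdmissibleLeft (T : ℝ → ℝ) (c : ℝ) (s : ℕ → Bool) : Prop :=
  ∀ m : ℕ, ∃ x ∈ Set.Icc (0 : ℝ) 1, ∃ p : ℕ,
    ∀ j ≤ m, itin T c x (p + j) = b2f (s (m - j))

/-- The word condition `s_{-(n-1)} … s_{-1} = c₁ … c_{n-1}`, where `ν = c₁c₂…` is the
(modified) kneading sequence, i.e. `c_j = kneading T c (j-1)`; for `n = 1` it is vacuous. -/
noncomputable def PrefixMatch (T : ℝ → ℝ) (c : ℝ) (s : ℕ → Bool) (n : ℕ) : Prop :=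
  ∀ i, i < n - 1 → b2f (s i) = kneading T c (n - 2 - i)

/-- `#_1(c₁…c_k)`: the number of `1`s among the first `k` entries of the kneading sequence. -/
noncomputable def kneadOnes (T : ℝ → ℝ) (c : ℝ) (k : ℕ) : ℕ :=
  ((Finset.range k).filter fun j => kneading T c j = 2).card

/-- The set `{n > 1 : s_{-(n-1)}…s_{-1} = c₁…c_{n-1}, #_1(c₁…c_{n-1}) odd}`;
`τ_L(s)` is its supremum. -/
def tauLSet (T : ℝ → ℝ) (c : ℝ) (s : ℕ → Bool) : Set ℕ :=
  {n | 1 < n ∧ PrefixMatch T c s n ∧ Odd (kneadOnes T c (n - 1))}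

/-- The set `{n ≥ 1 : s_{-(n-1)}…s_{-1} = c₁…c_{n-1}, #_1(c₁…c_{n-1}) even}`;
`τ_R(s)` is its supremum. -/
def tauRSet (T : ℝ → ℝ) (c : ℝ) (s : ℕ → Bool) : Set ℕ :=
  {n | 1 ≤ n ∧ PrefixMatch T c s n ∧ Even (kneadOnes T c (n - 1))}

/-- `x_i` matches the symbol `s_i ∈ {0,1}` : either `x_i` lies strictly on the side
of `c` prescribed by `s_i`, or `x_i = c` (in which case, after the identifications of
itineraries containing `*`, the coordinate matches both symbols). -/
def SymMatch (c y : ℝ) (b : Bool) : Prop :=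
  y = c ∨ (y < c ∧ b = false) ∨ (c < y ∧ b = true)

/-- The basic arc `A(s) = {x ∈ X : ν_i(x) = s_i for all i < 0}` of an admissible
left-infinite sequence `s`. -/
def basicArc (T : ℝ → ℝ) (c : ℝ) (s : ℕ → Bool) : Set (ℕ → ℝ) :=
  {x | x ∈ invLimitSet T ∧ ∀ i : ℕ, SymMatch c (x (i + 1)) (s i)}

/-- The projection `π₀` of the inverse limit to the `0`-th coordinate. -/
def proj0 (x : ℕ → ℝ) : ℝ := x 0

/-!
If the last `k` symbols of `s` spell `c₁…c_k`, then along any backward orbit coded by `s` the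
`k`-th preimage of `y` and `T(c)` run through the same branches of `T` for `k` steps. The former is
at most `T(c)`, and each visit to the decreasing branch reverses the order, so `T^{k+1}(c)` bounds
`y` from above or from below according to the parity of `#₁(c₁…c_k)`.

Conversely, admissibility says that every subword of `s` is dominated by `ν` in the
parity-lexicographical order. This is exactly what is needed for a point obeying all of these
bounds to have a preimage on the branch `s_{-1}` obeying the bounds of the shifted sequence;
iterating yields a backward orbit in `A(s)`. Finally, of two bounds on the same side the one from
the longer match is the sharper.
-/

/-- The order twisted by parity: `a ≤ b` if `n` is even and `b ≤ a` if `n` is odd. It compares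
points of an orbit, as well as symbols of an itinerary, after `n` visits to the decreasing
branch. -/
def ParityLe {α : Type*} [LE α] (n : ℕ) (a b : α) : Prop :=
  (Even n → a ≤ b) ∧ (Odd n → b ≤ a)

/-- `OnSide c v y` says that `y` lies in the closure of the set of points with symbol `v`. It is
the form in which a symbol of the modified itinerary still constrains a point that hits `c`. -/
def OnSide {α : Type*} [LE α] (c : α) (v : Fin 3) (y : α) : Prop :=
  (v < 2 → y ≤ c) ∧ (0 < v → c ≤ y)

section Parity

variable {α : Type*} {n : ℕ} {a b : α}

lemma parityLe_zero [LE α] : ParityLe 0 a b ↔ a ≤ b := by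
  simp [ParityLe]

lemma parityLe_add_one [LE α] : ParityLe (n + 1) a b ↔ ParityLe n b a := by
  simp only [ParityLe, Nat.even_add_one, Nat.odd_add_one, Nat.not_even_iff_odd,
    Nat.not_odd_iff_even, and_comm]

end Parity

section OnSide

variable {α : Type*} {c a b : α} {v w : Fin 3} {n : ℕ}

lemma OnSide.le_of_lt [Preorder α] (ha : OnSide c v a) (hb : OnSide c w b) (hvw : v < w) :
    a ≤ b :=
  (ha.1 (hvw.trans_le (Fin.le_last w))).trans (hb.2 ((Fin.zero_le v).trans_lt hvw))

lemma OnSide.symbol_le [PartialOrder α] (ha : OnSide c v a) (hb : OnSide c w b) (hab : a ≤ b)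
    (htie : a = c → b = c → v = w) : v ≤ w := by
  by_contra! hwv
  have hbc : b ≤ c := hb.1 (hwv.trans_le (Fin.le_last v))
  have hca : c ≤ a := ha.2 ((Fin.zero_le w).trans_lt hwv)
  exact hwv.ne' (htie ((hab.trans hbc).antisymm hca) (hbc.antisymm (hca.trans hab)))

lemma ParityLe.of_onSide_of_ne [Preorder α] (h : ParityLe n v w) (ha : OnSide c v a)
    (hb : OnSide c w b) (hne : v ≠ w) : ParityLe n a b :=
  ⟨fun he => ha.le_of_lt hb ((h.1 he).lt_of_ne hne),
    fun ho => hb.le_of_lt ha ((h.2 ho).lt_of_ne hne.symm)⟩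

lemma ParityLe.symbol [PartialOrder α] (h : ParityLe n a b) (ha : OnSide c v a)
    (hb : OnSide c w b) (htie : a = c → b = c → v = w) : ParityLe n v w :=
  ⟨fun he => ha.symbol_le hb (h.1 he) htie,
    fun ho => hb.symbol_le ha (h.2 ho) fun hbc hac => (htie hac hbc).symm⟩

end OnSide

lemma exists_seq_of_forall_mem_exists {α : Type*} {R : ℕ → Set α} {P : ℕ → α → α → Prop} {a : α}
    (ha : a ∈ R 0) (h : ∀ n, ∀ y ∈ R n, ∃ x ∈ R (n + 1), P n y x) :
    ∃ u : ℕ → α, u 0 = a ∧ ∀ n, u n ∈ R n ∧ P n (u n) (u (n + 1)) := by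
  choose f hf hP using h
  let u : (n : ℕ) → R n := fun n =>
    Nat.rec (motive := fun n => R n) ⟨a, ha⟩ (fun n y => ⟨f n y y.2, hf n y y.2⟩) n
  exact ⟨fun n => u n, rfl, fun n => ⟨(u n).2, hP n (u n) (u n).2⟩⟩

section Symbols

variable {T : ℝ → ℝ} {c : ℝ}

lemma onesCount_succ (s : ℕ → Fin 3) (k : ℕ) :
    onesCount s (k + 1) = onesCount s k + if s k = 2 then 1 else 0 := by
  simp only [onesCount, Finset.card_filter, Finset.sum_range_succ]

lemma kneadOnes_succ (T : ℝ → ℝ) (c : ℝ) (k : ℕ) :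
    kneadOnes T c (k + 1) = kneadOnes T c k + if kneading T c k = 2 then 1 else 0 :=
  onesCount_succ (kneading T c) k

lemma b2f_ne_one (b : Bool) : b2f b ≠ 1 := by
  cases b <;> decide

lemma symMatch_iff_onSide {y : ℝ} {b : Bool} : SymMatch c y b ↔ OnSide c (b2f b) y := by
  cases b <;> simp [SymMatch, OnSide, b2f, le_iff_eq_or_lt, eq_comm]

lemma rawItin_eq_one_iff {x : ℝ} {n : ℕ} : rawItin T c x n = 1 ↔ T^[n] x = c := by
  unfold rawItin
  split_ifs with hlt heq
  · simp [hlt.ne]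
  · simp [heq]
  · simp [heq]

lemma rawItin_congr {x : ℝ} {m n : ℕ} (h : T^[m] x = T^[n] x) :
    rawItin T c x m = rawItin T c x n := by
  simp only [rawItin, h]

lemma onSide_rawItin (x : ℝ) (n : ℕ) : OnSide c (rawItin T c x n) (T^[n] x) := by
  unfold rawItin
  split_ifs with hlt heq
  · simp [OnSide, hlt.le]
  · simp [OnSide, heq]
  · simp [OnSide, not_lt.1 hlt]

lemma exists_kneading_eq_ite (T : ℝ → ℝ) (c : ℝ) : ∃ b : Fin 3, ∀ j,
    kneading T c j = if T^[j] (T c) = c then b else rawItin T c (T c) j := by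
  classical
  by_cases h : ∃ i, rawItin T c (T c) i = 1
  · obtain ⟨b, hb⟩ : ∃ b : Fin 3, ∀ j, kneading T c j =
        if j % (Nat.find h + 1) = Nat.find h then b
        else rawItin T c (T c) (j % (Nat.find h + 1)) := by
      simp only [kneading, dif_pos h, Nat.add_sub_cancel]
      split_ifs
      exacts [⟨0, fun _ => rfl⟩, ⟨2, fun _ => rfl⟩]
    have hfind : T^[Nat.find h] (T c) = c := rawItin_eq_one_iff.1 (Nat.find_spec h)
    have hper : Function.IsPeriodicPt T (Nat.find h + 1) (T c) := by
      rw [Function.IsPeriodicPt, Function.IsFixedPt, Function.iterate_succ_apply', hfind]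
    have hmod (j : ℕ) : T^[j % (Nat.find h + 1)] (T c) = T^[j] (T c) := hper.iterate_mod_apply j
    have hhit (j : ℕ) : j % (Nat.find h + 1) = Nat.find h ↔ T^[j] (T c) = c := by
      refine ⟨fun hj => by rw [← hmod, hj, hfind], fun hj => ?_⟩
      rw [← hmod, ← rawItin_eq_one_iff] at hj
      exact (Nat.lt_succ_iff.1 (Nat.mod_lt j (Nat.succ_pos _))).antisymm (Nat.find_min' h hj)
    refine ⟨b, fun j => ?_⟩
    simp only [hb, hhit, rawItin_congr (hmod j)]
  · refine ⟨0, fun j => ?_⟩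
    rw [if_neg fun hj => h ⟨j, rawItin_eq_one_iff.2 hj⟩, kneading, dif_neg h]

lemma onSide_kneading (j : ℕ) : OnSide c (kneading T c j) (T^[j] (T c)) := by
  obtain ⟨b, hb⟩ := exists_kneading_eq_ite T c
  rw [hb]
  split_ifs with hj
  · simp [OnSide, hj]
  · exact onSide_rawItin _ _

lemma kneading_eq_of_iterate_eq {i j : ℕ} (hi : T^[i] (T c) = c) (hj : T^[j] (T c) = c) :
    kneading T c i = kneading T c j := by
  obtain ⟨b, hb⟩ := exists_kneading_eq_ite T c
  rw [hb, hb, if_pos hi, if_pos hj]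

lemma itin_cases (T : ℝ → ℝ) (c x : ℝ) (n : ℕ) :
    (itin T c x n = rawItin T c x n) ∨
      ∃ m, T^[n] x = T^[m] (T c) ∧ itin T c x n = kneading T c m := by
  classical
  by_cases h : ∃ i, T^[i] x = c
  · have hfind := Nat.find_spec h
    simp only [itin, dif_pos h]
    split_ifs with hlt heq
    · exact .inl rfl
    · exact .inl (by rw [heq, rawItin_eq_one_iff.2 hfind])
    · refine .inr ⟨n - Nat.find h - 1, ?_, rfl⟩
      obtain ⟨m, hm⟩ : ∃ m, n = m + 1 + Nat.find h := ⟨n - Nat.find h - 1, by omega⟩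
      rw [show n - Nat.find h - 1 = m by omega, ← Function.iterate_succ_apply]
      conv_lhs => rw [hm, Function.iterate_add_apply, hfind]
  · exact .inl (by rw [itin, dif_neg h])

lemma onSide_itin (x : ℝ) (n : ℕ) : OnSide c (itin T c x n) (T^[n] x) := by
  obtain h | ⟨m, hm, h⟩ := itin_cases T c x n
  · exact h ▸ onSide_rawItin x n
  · exact h ▸ hm ▸ onSide_kneading m

lemma itin_eq_kneading_of_iterate_eq {x : ℝ} {n k : ℕ} (hne : itin T c x n ≠ 1)
    (hn : T^[n] x = c) (hk : T^[k] (T c) = c) : itin T c x n = kneading T c k := by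
  obtain h | ⟨m, hm, h⟩ := itin_cases T c x n
  · exact absurd (h.trans (rawItin_eq_one_iff.2 hn)) hne
  · exact h.trans (kneading_eq_of_iterate_eq (hm.symm.trans hn) hk)

end Symbols

section PrefixMatch

variable {T : ℝ → ℝ} {c : ℝ} {s : ℕ → Bool} {k : ℕ}

lemma prefixMatch_succ_iff :
    PrefixMatch T c s (k + 1) ↔ ∀ i j, i + j + 1 = k → b2f (s i) = kneading T c j := by
  refine ⟨fun h i j hij => ?_, fun h i hi => h i _ (by omega)⟩
  rw [h i (by omega)]
  congr 1
  omega

lemma prefixMatch_one : PrefixMatch T c s 1 :=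
  fun _ hi => absurd hi (Nat.not_lt_zero _)

lemma PrefixMatch.cons {n : ℕ} (h : PrefixMatch T c (fun i => s (i + (n + 1))) (k + 1))
    (hn : b2f (s n) = kneading T c k) : PrefixMatch T c (fun i => s (i + n)) (k + 2) := by
  rw [prefixMatch_succ_iff] at h ⊢
  rintro (_ | i) j hij
  · obtain rfl : j = k := by omega
    simpa only [Nat.zero_add] using hn
  · simpa only [Nat.add_assoc, Nat.add_comm 1 n] using h i j (by omega)

end PrefixMatch

namespace IsUnimodal

variable {T : ℝ → ℝ} {c : ℝ}

lemma crit_mem_Icc (hT : IsUnimodal T c) : c ∈ Set.Icc (0 : ℝ) 1 :=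
  ⟨hT.2.2.2.1.le, hT.2.2.2.2.1.le⟩

lemma iterate_mem_Icc (hT : IsUnimodal T c) {y : ℝ} (hy : y ∈ Set.Icc (0 : ℝ) 1) (k : ℕ) :
    T^[k] y ∈ Set.Icc (0 : ℝ) 1 :=
  hT.2.1.iterate k hy

lemma apply_le_apply_crit (hT : IsUnimodal T c) {y : ℝ} (hy : y ∈ Set.Icc (0 : ℝ) 1) :
    T y ≤ T c := by
  obtain ⟨-, -, -, hc0, hc1, hmono, hanti⟩ := hT
  rcases le_total y c with h | h
  · exact hmono.monotoneOn ⟨hy.1, h⟩ ⟨hc0.le, le_rfl⟩ h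
  · exact hanti.antitoneOn ⟨le_rfl, hc1.le⟩ ⟨h, hy.2⟩ h

lemma parityLe_apply_iff (hT : IsUnimodal T c) {a b : ℝ} (ha : a ∈ Set.Icc (0 : ℝ) 1)
    (hb : b ∈ Set.Icc (0 : ℝ) 1) {v : Fin 3} (hva : OnSide c v a) (hvb : OnSide c v b) (n : ℕ) :
    ParityLe (n + if v = 2 then 1 else 0) (T a) (T b) ↔ ParityLe n a b := by
  obtain ⟨-, -, -, -, -, hmono, hanti⟩ := hT
  split_ifs with hv
  · have hca : a ∈ Set.Icc c 1 := ⟨hva.2 (by simp [hv]), ha.2⟩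
    have hcb : b ∈ Set.Icc c 1 := ⟨hvb.2 (by simp [hv]), hb.2⟩
    rw [parityLe_add_one, ParityLe, ParityLe, hanti.le_iff_ge hcb hca, hanti.le_iff_ge hca hcb]
  · have hv2 : v < 2 := (Fin.le_last v).lt_of_ne hv
    have hac : a ∈ Set.Icc 0 c := ⟨ha.1, hva.1 hv2⟩
    have hbc : b ∈ Set.Icc 0 c := ⟨hb.1, hvb.1 hv2⟩
    rw [add_zero, ParityLe, ParityLe, hmono.le_iff_le hac hbc, hmono.le_iff_le hbc hac]

lemma parityLe_iterate_iff (hT : IsUnimodal T c) {y z : ℝ} (hy : y ∈ Set.Icc (0 : ℝ) 1)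
    (hz : z ∈ Set.Icc (0 : ℝ) 1) {v : ℕ → Fin 3} {k : ℕ}
    (hvy : ∀ i < k, OnSide c (v i) (T^[i] y)) (hvz : ∀ i < k, OnSide c (v i) (T^[i] z)) :
    ParityLe (onesCount v k) (T^[k] y) (T^[k] z) ↔ y ≤ z := by
  induction k with
  | zero => exact parityLe_zero
  | succ k ih =>
    rw [onesCount_succ, Function.iterate_succ_apply', Function.iterate_succ_apply',
      hT.parityLe_apply_iff (hT.iterate_mem_Icc hy k) (hT.iterate_mem_Icc hz k)
        (hvy k k.lt_succ_self) (hvz k k.lt_succ_self),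
      ih (fun i hi => hvy i (hi.trans k.lt_succ_self))
        (fun i hi => hvz i (hi.trans k.lt_succ_self))]

lemma parityLe_iterate_crit (hT : IsUnimodal T c) {y : ℝ} (hy : y ∈ Set.Icc (0 : ℝ) 1) {k : ℕ}
    (hk : ∀ i < k, OnSide c (kneading T c i) (T^[i + 1] y)) :
    ParityLe (kneadOnes T c k) (T^[k + 1] y) (T^[k + 1] c) :=
  (hT.parityLe_iterate_iff (hT.2.1 hy) (hT.2.1 hT.crit_mem_Icc) hk
    fun i _ => onSide_kneading i).2 (hT.apply_le_apply_crit hy)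

lemma exists_preimage_left (hT : IsUnimodal T c) {y : ℝ} (hy : y ∈ Set.Icc 0 (T c)) :
    ∃ x ∈ Set.Icc 0 c, T x = y := by
  obtain ⟨hcont, -, hT0, hc0, hc1, -, -⟩ := hT
  exact intermediate_value_Icc hc0.le (hcont.mono (Set.Icc_subset_Icc_right hc1.le))
    (by rwa [hT0])

lemma exists_preimage_right (hT : IsUnimodal T c) {d y : ℝ} (hd : d ∈ Set.Icc c 1)
    (hy : y ∈ Set.Icc (T d) (T c)) : ∃ x ∈ Set.Icc c d, T x = y :=
  intermediate_value_Icc' hd.1 (hT.1.mono (Set.Icc_subset_Icc hT.2.2.2.1.le hd.2)) hy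

end IsUnimodal

/-- Every word of `s` that extends a word `c₁…c_k` by one symbol weakly precedes `c₁…c_{k+1}` in the
parity-lexicographical order. This is the combinatorial content of admissibility. -/
def KneadingDominated (T : ℝ → ℝ) (c : ℝ) (s : ℕ → Bool) : Prop :=
  ∀ n k, PrefixMatch T c (fun i => s (i + (n + 1))) (k + 1) →
    ParityLe (kneadOnes T c k) (b2f (s n)) (kneading T c k)

/-- The points of `[0,1]` obeying every bound `T^{k+1}(c)` that a match of the last `k` symbols
of `s` with the kneading sequence imposes on `π₀(A(s))`. -/
def kneadingRegion (T : ℝ → ℝ) (c : ℝ) (s : ℕ → Bool) : Set ℝ :=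
  {y | y ∈ Set.Icc (0 : ℝ) 1 ∧
    ∀ k, PrefixMatch T c s (k + 1) → ParityLe (kneadOnes T c k) y (T^[k + 1] c)}

section Region

variable {T : ℝ → ℝ} {c : ℝ} {s : ℕ → Bool}

lemma AdmissibleLeft.kneadingDominated (hadm : AdmissibleLeft T c s) (hT : IsUnimodal T c) :
    KneadingDominated T c s := by
  intro n k hk
  rw [prefixMatch_succ_iff] at hk
  -- One more symbol than the match needs, so that the matched orbit starts in the image of `T`.
  obtain ⟨x, hx, p, hp⟩ := hadm (n + k + 1)
  have hitin (i : ℕ) : T^[i + 1] (T^[p] x) = T^[p + (i + 1)] x := by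
    rw [← Function.iterate_add_apply, Nat.add_comm p]
  have hprefix : ∀ i < k, itin T c x (p + (i + 1)) = kneading T c i := by
    intro i hi
    rw [hp (i + 1) (by omega), ← hk (k - 1 - i) i (by omega)]
    congr 2
    omega
  have hlast : itin T c x (p + (k + 1)) = b2f (s n) := by
    rw [hp (k + 1) (by omega), show n + k + 1 - (k + 1) = n by omega]
  have horbit := hT.parityLe_iterate_crit (hT.iterate_mem_Icc hx p) (k := k) fun i hi => by
    rw [hitin, ← hprefix i hi]
    exact onSide_itin x _
  rw [hitin] at horbit
  rw [← hlast]
  exact horbit.symbol (onSide_itin x _) (onSide_kneading k)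
    (itin_eq_kneading_of_iterate_eq (hlast ▸ b2f_ne_one _))

lemma le_of_mem_kneadingRegion {y : ℝ} (hy : y ∈ kneadingRegion T c s) : y ≤ T c :=
  parityLe_zero.1 (hy.2 0 prefixMatch_one)

lemma KneadingDominated.exists_preimage_onSide (hs : KneadingDominated T c s)
    (hT : IsUnimodal T c) {n : ℕ} {y : ℝ} (hy : y ∈ kneadingRegion T c (fun i => s (i + n))) :
    ∃ x ∈ Set.Icc (0 : ℝ) 1, OnSide c (b2f (s n)) x ∧ T x = y := by
  have hyc := le_of_mem_kneadingRegion hy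
  have hc := hT.crit_mem_Icc
  cases hb : s n with
  | false =>
    obtain ⟨x, hx, hxy⟩ := hT.exists_preimage_left ⟨hy.1.1, hyc⟩
    exact ⟨x, ⟨hx.1, hx.2.trans hc.2⟩, ⟨fun _ => hx.2, fun h => absurd h (by decide)⟩, hxy⟩
  | true =>
    have hnu : kneading T c 0 = 2 := by
      have h := parityLe_zero.1 (hs n 0 prefixMatch_one)
      rw [hb] at h
      exact (Fin.le_last _).antisymm h
    have hcTc : c ≤ T c := (onSide_kneading (T := T) 0).2 (by rw [hnu]; decide)
    have hTTc : T (T c) ≤ y := by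
      have hodd : kneadOnes T c 1 = 1 := by simp [kneadOnes, Finset.filter_singleton, hnu]
      exact (hy.2 1 (prefixMatch_one.cons (by rw [hb, hnu]; rfl))).2 (by rw [hodd]; exact odd_one)
    obtain ⟨x, hx, hxy⟩ := hT.exists_preimage_right ⟨hcTc, (hT.2.1 hc).2⟩ ⟨hTTc, hyc⟩
    exact ⟨x, ⟨hc.1.trans hx.1, hx.2.trans (hT.2.1 hc).2⟩,
      ⟨fun h => absurd h (by decide), fun _ => hx.1⟩, hxy⟩

lemma KneadingDominated.exists_preimage_mem_kneadingRegion (hs : KneadingDominated T c s)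
    (hT : IsUnimodal T c) {n : ℕ} {y : ℝ} (hy : y ∈ kneadingRegion T c (fun i => s (i + n))) :
    ∃ x ∈ kneadingRegion T c (fun i => s (i + (n + 1))), T x = y ∧ SymMatch c x (s n) := by
  obtain ⟨x, hx, hside, rfl⟩ := hs.exists_preimage_onSide hT hy
  refine ⟨x, ⟨hx, fun k hk => ?_⟩, rfl, symMatch_iff_onSide.2 hside⟩
  by_cases hnk : b2f (s n) = kneading T c k
  · rw [← hT.parityLe_apply_iff hx (hT.iterate_mem_Icc hT.crit_mem_Icc _) (hnk ▸ hside)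
      (onSide_kneading k), ← Function.iterate_succ_apply' T]
    exact kneadOnes_succ T c k ▸ hy.2 (k + 1) (hk.cons hnk)
  · exact (hs n k hk).of_onSide_of_ne hside (onSide_kneading k) hnk

lemma KneadingDominated.kneadingRegion_subset_image (hs : KneadingDominated T c s)
    (hT : IsUnimodal T c) : kneadingRegion T c s ⊆ proj0 '' basicArc T c s := by
  intro y hy
  obtain ⟨x, rfl, hx⟩ := exists_seq_of_forall_mem_exists
    (R := fun n => kneadingRegion T c fun i => s (i + n)) hy
    fun n _ hz => hs.exists_preimage_mem_kneadingRegion hT hz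
  exact ⟨x, ⟨⟨fun n => (hx n).1.1, fun n => (hx n).2.1⟩, fun n => (hx n).2.2⟩, rfl⟩

lemma iterate_apply_of_mem_invLimitSet {x : ℕ → ℝ} (hx : x ∈ invLimitSet T) (i n : ℕ) :
    T^[i] (x (n + i)) = x n := by
  induction i with
  | zero => rfl
  | succ i ih => rw [Function.iterate_succ_apply, ← Nat.add_assoc, hx.2, ih]

lemma image_basicArc_subset_kneadingRegion (hT : IsUnimodal T c) :
    proj0 '' basicArc T c s ⊆ kneadingRegion T c s := by
  rintro _ ⟨x, ⟨hx, hsym⟩, rfl⟩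
  refine ⟨hx.1 0, fun k hk => ?_⟩
  rw [prefixMatch_succ_iff] at hk
  have hiter := iterate_apply_of_mem_invLimitSet hx
  have hproj : T^[k + 1] (x (k + 1)) = x 0 := by simpa only [Nat.zero_add] using hiter (k + 1) 0
  have h := hT.parityLe_iterate_crit (hx.1 (k + 1)) (k := k) fun i hi => by
    obtain ⟨j, rfl⟩ := Nat.exists_eq_add_of_lt hi
    rw [← hk j i (by omega), show i + j + 1 + 1 = j + 1 + (i + 1) by omega, hiter]
    exact symMatch_iff_onSide.1 (hsym j)
  rwa [hproj] at h

lemma kneadingRegion_eq (T : ℝ → ℝ) (c : ℝ) (s : ℕ → Bool) :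
    kneadingRegion T c s = Set.Icc 0 1 ∩
      (upperBounds ((T^[·] c) '' tauLSet T c s) ∩ lowerBounds ((T^[·] c) '' tauRSet T c s)) := by
  ext y
  simp only [kneadingRegion, Set.mem_inter_iff, mem_upperBounds, mem_lowerBounds,
    Set.forall_mem_image, Set.mem_ofPred_eq]
  refine and_congr_right fun _ => ⟨fun h => ⟨?_, ?_⟩, fun h k hk => ⟨fun he => ?_, fun ho => ?_⟩⟩
  · rintro (_ | k) ⟨hk1, hk, ho⟩
    exacts [absurd hk1 (by omega), (h k hk).2 ho]
  · rintro (_ | k) ⟨hk1, hk, he⟩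
    exacts [absurd hk1 (by omega), (h k hk).1 he]
  · exact h.2 ⟨k.succ_pos, hk, he⟩
  · have hk0 : k ≠ 0 := by
      rintro rfl
      simp [kneadOnes] at ho
    exact h.1 ⟨by omega, hk, ho⟩

lemma IsUnimodal.parityLe_iterate_crit_of_prefixMatch (hT : IsUnimodal T c) {k l : ℕ}
    (hkl : k ≤ l) (hk : PrefixMatch T c s (k + 1)) (hl : PrefixMatch T c s (l + 1)) :
    ParityLe (kneadOnes T c k) (T^[l + 1] c) (T^[k + 1] c) := by
  obtain ⟨d, rfl⟩ := Nat.exists_eq_add_of_le hkl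
  rw [prefixMatch_succ_iff] at hk hl
  have hiter (i : ℕ) : T^[i + 1] (T^[d] c) = T^[i + d] (T c) := by
    rw [← Function.iterate_add_apply, ← Function.iterate_succ_apply, Nat.succ_eq_add_one,
      Nat.add_right_comm]
  have h := hT.parityLe_iterate_crit (hT.iterate_mem_Icc hT.crit_mem_Icc d) (k := k) fun i hi => by
    rw [hiter, ← hk (k - 1 - i) i (by omega), hl (k - 1 - i) (i + d) (by omega)]
    exact onSide_kneading _
  rwa [hiter] at h

lemma IsUnimodal.monotoneOn_iterate_tauLSet (hT : IsUnimodal T c) :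
    MonotoneOn (T^[·] c) (tauLSet T c s) := by
  rintro (_ | k) ⟨hk1, hk, hodd⟩ (_ | l) ⟨hl1, hl, -⟩ hkl
  any_goals omega
  exact (hT.parityLe_iterate_crit_of_prefixMatch (Nat.le_of_succ_le_succ hkl) hk hl).2 hodd

lemma IsUnimodal.antitoneOn_iterate_tauRSet (hT : IsUnimodal T c) :
    AntitoneOn (T^[·] c) (tauRSet T c s) := by
  rintro (_ | k) ⟨hk1, hk, heven⟩ (_ | l) ⟨hl1, hl, -⟩ hkl
  any_goals omega
  exact (hT.parityLe_iterate_crit_of_prefixMatch (Nat.le_of_succ_le_succ hkl) hk hl).1 heven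

end Region

theorem stmt5_general {T : ℝ → ℝ} {c : ℝ} (hT : IsUnimodal T c) {s : ℕ → Bool}
    (hadm : AdmissibleLeft T c s) :
    proj0 '' basicArc T c s = Set.Icc 0 1 ∩
      (upperBounds ((T^[·] c) '' tauLSet T c s) ∩ lowerBounds ((T^[·] c) '' tauRSet T c s)) := by
  rw [← kneadingRegion_eq]
  exact (image_basicArc_subset_kneadingRegion hT).antisymm
    ((hadm.kneadingDominated hT).kneadingRegion_subset_image hT)

/-- If `s ∈ {0,1}^{-ℕ}` is admissible and `τ_L(s) = nL < ∞`, `τ_R(s) = nR < ∞`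
(i.e. `nL` and `nR` are the greatest elements of the respective defining sets), then
`π₀(A(s)) = [T^{τ_L(s)}(c), T^{τ_R(s)}(c)]`. -/
theorem stmt5 (T : ℝ → ℝ) (c : ℝ) (hT : IsUnimodal T c) (s : ℕ → Bool)
    (hadm : AdmissibleLeft T c s) (nL nR : ℕ)
    (hL : IsGreatest (tauLSet T c s) nL) (hR : IsGreatest (tauRSet T c s) nR) :
    proj0 '' basicArc T c s = Set.Icc (T^[nL] c) (T^[nR] c) := by
  rw [stmt5_general hT hadm, (hT.monotoneOn_iterate_tauLSet.map_isGreatest hL).upperBounds_eq,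
    (hT.antitoneOn_iterate_tauRSet.map_isGreatest hR).lowerBounds_eq, Set.Ici_inter_Iic,
    Set.inter_eq_right]
  exact Set.Icc_subset_Icc (hT.iterate_mem_Icc hT.crit_mem_Icc nL).1
    (hT.iterate_mem_Icc hT.crit_mem_Icc nR).2
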